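/- Let S = f(X) be a sufficient statistic for Y that achieves the minimum of I(X;T) over all sufficient statistics, i.e., I(X;S) ≤ I(X;T) for every sufficient statistic T = h(X). Then S is a minimal sufficient statistic: for every sufficient statistic T = h(X) there exists a function g with S = g(T) μ-almost surely. -/

import Mathlib

open MeasureTheory Real
open scoped Classical

noncomputable def prOf {Ω α : Type*} [MeasurableSpace Ω] (μ : Measure Ω) (X : Ω → α) (x : α) : ℝ :=
  (μ (X ⁻¹' {x})).toReal

noncomputable def entOf {Ω α : Type*} [MeasurableSpace Ω] [Fintype α] (μ : Measure Ω) (X : Ω → α) : ℝ :=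
  -∑ x, prOf μ X x * Real.log (prOf μ X x)

noncomputable def miOf {Ω α β : Type*} [MeasurableSpace Ω] [Fintype α] [Fintype β]
    (μ : Measure Ω) (X : Ω → α) (Y : Ω → β) : ℝ :=
  entOf μ X + entOf μ Y - entOf μ (fun ω => (X ω, Y ω))

/-- `X` and `Y` are conditionally independent given `S`:
`P(X=x, Y=y | S=s) = P(X=x | S=s) * P(Y=y | S=s)` whenever `P(S=s) > 0`. -/
def CondIndepGiven {Ω α β γ : Type*} [MeasurableSpace Ω] (μ : Measure Ω)
    (X : Ω → α) (Y : Ω → β) (S : Ω → γ) : Prop :=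
  ∀ (x : α) (y : β) (s : γ), 0 < prOf μ S s →
    prOf μ (fun ω => (X ω, Y ω, S ω)) (x, y, s) / prOf μ S s =
      (prOf μ (fun ω => (X ω, S ω)) (x, s) / prOf μ S s) *
      (prOf μ (fun ω => (Y ω, S ω)) (y, s) / prOf μ S s)

section FiniteRandomVariable

variable {Ω 𝒳 𝒴 𝒮 𝒯 : Type*} [MeasurableSpace Ω] {μ : Measure Ω}

lemma prOf_nonneg (X : Ω → 𝒳) (x : 𝒳) : 0 ≤ prOf μ X x :=
  ENNReal.toReal_nonneg

lemma prOf_pair_comp (X : Ω → 𝒳) (h : 𝒳 → 𝒯) (x : 𝒳) (t : 𝒯) :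
    prOf μ (fun ω => (X ω, h (X ω))) (x, t) = if h x = t then prOf μ X x else 0 := by
  split_ifs with hx
  · unfold prOf
    congr 2
    ext ω
    simp only [Set.mem_preimage, Set.mem_singleton_iff, Prod.mk.injEq]
    grind
  · have : (fun ω => (X ω, h (X ω))) ⁻¹' {(x, t)} = ∅ := by
      ext ω
      simp only [Set.mem_preimage, Set.mem_singleton_iff, Prod.mk.injEq, Set.mem_empty_iff_false]
      grind
    simp [prOf, this]

lemma prOf_triple_comp (X : Ω → 𝒳) (Y : Ω → 𝒴) (h : 𝒳 → 𝒯) (x : 𝒳) (y : 𝒴) (t : 𝒯) :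
    prOf μ (fun ω => (X ω, Y ω, h (X ω))) (x, y, t) =
      if h x = t then prOf μ (fun ω => (X ω, Y ω)) (x, y) else 0 := by
  split_ifs with hx
  · unfold prOf
    congr 2
    ext ω
    simp only [Set.mem_preimage, Set.mem_singleton_iff, Prod.mk.injEq]
    grind
  · have : (fun ω => (X ω, Y ω, h (X ω))) ⁻¹' {(x, y, t)} = ∅ := by
      ext ω
      simp only [Set.mem_preimage, Set.mem_singleton_iff, Prod.mk.injEq, Set.mem_empty_iff_false]
      grind
    simp [prOf, this]

lemma prOf_pair_le [IsFiniteMeasure μ] (X : Ω → 𝒳) (Y : Ω → 𝒴) (x : 𝒳) (y : 𝒴) :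
    prOf μ (fun ω => (X ω, Y ω)) (x, y) ≤ prOf μ X x := by
  refine ENNReal.toReal_mono (measure_ne_top μ _) (measure_mono fun ω hω => ?_)
  simp only [Set.mem_preimage, Set.mem_singleton_iff, Prod.mk.injEq] at hω
  exact hω.1

lemma ae_prOf_pos [IsFiniteMeasure μ] [Finite 𝒳] (X : Ω → 𝒳) : ∀ᵐ ω ∂μ, 0 < prOf μ X (X ω) := by
  have hnull : ∀ x : 𝒳, ∀ᵐ ω ∂μ, X ω = x → 0 < prOf μ X x := by
    intro x
    rcases (prOf_nonneg (μ := μ) X x).lt_or_eq with hx | hx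
    · exact Filter.Eventually.of_forall fun _ _ => hx
    · have : μ (X ⁻¹' {x}) = 0 := by
        simpa [prOf, ENNReal.toReal_eq_zero_iff, measure_ne_top] using hx.symm
      filter_upwards [measure_eq_zero_iff_ae_notMem.1 this] with ω hω hωx
      exact absurd hωx hω
  filter_upwards [ae_all_iff.2 hnull] with ω hω using hω _ rfl

variable [MeasurableSpace 𝒳] [MeasurableSingletonClass 𝒳] [Fintype 𝒳]

lemma measureReal_inter_preimage_comp [IsFiniteMeasure μ] {X : Ω → 𝒳} (hX : Measurable X)
    (h : 𝒳 → 𝒯) (t : 𝒯) {A : Set Ω} (hA : MeasurableSet A) :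
    μ.real (A ∩ (fun ω => h (X ω)) ⁻¹' {t}) =
      ∑ x with h x = t, μ.real (A ∩ X ⁻¹' {x}) := by
  rw [← measureReal_biUnion_finset]
  · congr 1
    ext ω
    simp
  · intro x _ x' _ hne
    refine Set.disjoint_left.2 fun ω hω hω' => hne ?_
    exact hω.2.symm.trans hω'.2
  · exact fun x _ => hA.inter (hX (measurableSet_singleton x))

lemma prOf_comp [IsFiniteMeasure μ] {X : Ω → 𝒳} (hX : Measurable X) (h : 𝒳 → 𝒯) (t : 𝒯) :
    prOf μ (fun ω => h (X ω)) t = ∑ x with h x = t, prOf μ X x := by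
  simpa [prOf, Measure.real] using
    measureReal_inter_preimage_comp (μ := μ) hX h t MeasurableSet.univ

lemma prOf_le_prOf_comp [IsFiniteMeasure μ] {X : Ω → 𝒳} (hX : Measurable X) (h : 𝒳 → 𝒯)
    (x : 𝒳) : prOf μ X x ≤ prOf μ (fun ω => h (X ω)) (h x) := by
  rw [prOf_comp hX]
  exact Finset.single_le_sum (f := fun x' => prOf μ X x') (fun x' _ => prOf_nonneg X x') (by simp)

lemma entOf_comp [IsFiniteMeasure μ] [Fintype 𝒯] {X : Ω → 𝒳} (hX : Measurable X) (h : 𝒳 → 𝒯) :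
    entOf μ (fun ω => h (X ω)) =
      -∑ x, prOf μ X x * Real.log (prOf μ (fun ω => h (X ω)) (h x)) := by
  unfold entOf
  rw [← Finset.sum_fiberwise (s := Finset.univ) (g := h)]
  congr 1
  refine Finset.sum_congr rfl fun t _ => ?_
  conv_lhs => rw [prOf_comp hX, Finset.sum_mul, ← prOf_comp hX]
  refine Finset.sum_congr rfl fun x hx => ?_
  rw [(Finset.mem_filter.1 hx).2]

/-- The mutual information between `X` and a statistic of `X` is the entropy of the statistic. -/
lemma miOf_comp [IsFiniteMeasure μ] [Fintype 𝒯] {X : Ω → 𝒳} (hX : Measurable X) (h : 𝒳 → 𝒯) :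
    miOf μ X (fun ω => h (X ω)) = entOf μ (fun ω => h (X ω)) := by
  have : entOf μ (fun ω => (X ω, h (X ω))) = entOf μ X := by
    rw [entOf_comp hX (fun x => (x, h x))]
    simp [prOf_pair_comp, entOf]
  rw [miOf, this]
  ring

/-- `h(X)` is sufficient for `Y` iff the conditional law of `Y` given `X = x` depends on `x`
only through `h x`. -/
lemma condIndepGiven_comp_iff [IsFiniteMeasure μ] [MeasurableSpace 𝒴] [MeasurableSingletonClass 𝒴]
    {X : Ω → 𝒳} {Y : Ω → 𝒴} (hX : Measurable X) (hY : Measurable Y) (h : 𝒳 → 𝒯) :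
    CondIndepGiven μ X Y (fun ω => h (X ω)) ↔
      ∀ x x', 0 < prOf μ X x → 0 < prOf μ X x' → h x = h x' → ∀ y,
        prOf μ (fun ω => (X ω, Y ω)) (x, y) / prOf μ X x =
          prOf μ (fun ω => (X ω, Y ω)) (x', y) / prOf μ X x' := by
  constructor
  · intro hsuff
    have key : ∀ x, 0 < prOf μ X x → ∀ y,
        prOf μ (fun ω => (X ω, Y ω)) (x, y) / prOf μ X x =
          prOf μ (fun ω => (Y ω, h (X ω))) (y, h x) / prOf μ (fun ω => h (X ω)) (h x) := by
      intro x hx y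
      have hpos := hx.trans_le (prOf_le_prOf_comp (μ := μ) hX h x)
      have := hsuff x y (h x) hpos
      rw [prOf_triple_comp, prOf_pair_comp, if_pos rfl, if_pos rfl] at this
      field_simp at this ⊢
      linarith
    intro x x' hx hx' hxx' y
    rw [key x hx, key x' hx', hxx']
  · intro hfac x y t ht
    rw [prOf_triple_comp, prOf_pair_comp]
    split_ifs with hxt
    · rcases (prOf_nonneg (μ := μ) X x).eq_or_lt with hx | hx
      · have hxy : prOf μ (fun ω => (X ω, Y ω)) (x, y) = 0 :=
          le_antisymm ((prOf_pair_le X Y x y).trans hx.ge) (prOf_nonneg _ _)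
        simp [hxy, ← hx]
      · have hYT : prOf μ (fun ω => (Y ω, h (X ω))) (y, t) =
            ∑ x' with h x' = t, prOf μ (fun ω => (X ω, Y ω)) (x', y) := by
          have := measureReal_inter_preimage_comp (μ := μ) hX h t
            (hY (measurableSet_singleton y))
          convert this using 2
          · unfold prOf Measure.real
            congr 2
            ext ω
            simp
          · unfold prOf Measure.real
            congr 2
            ext ω
            simp [and_comm]
        have hprod : prOf μ (fun ω => (Y ω, h (X ω))) (y, t) =
            prOf μ (fun ω => (X ω, Y ω)) (x, y) / prOf μ X x *
              prOf μ (fun ω => h (X ω)) t := by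
          rw [hYT, prOf_comp hX, Finset.mul_sum]
          refine Finset.sum_congr rfl fun x' hx't => ?_
          rcases (prOf_nonneg (μ := μ) X x').eq_or_lt with hx' | hx'
          · rw [← hx', mul_zero]
            exact le_antisymm ((prOf_pair_le X Y x' y).trans hx'.ge) (prOf_nonneg _ _)
          · rw [hfac x x' hx hx' (hxt.trans (Finset.mem_filter.1 hx't).2.symm) y]
            field_simp
        rw [hprod]
        field_simp
    · simp

/-- If `m` is almost surely a function of `f` and `f(X)` has no more entropy than `m(X)`, then
`f` is in turn determined by `m` on the support of `X`. -/
lemma eq_of_entOf_comp_le [IsFiniteMeasure μ] [Fintype 𝒮] [Fintype 𝒯] {X : Ω → 𝒳}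
    (hX : Measurable X) {f : 𝒳 → 𝒮} {m : 𝒳 → 𝒯}
    (hfm : ∀ x x', 0 < prOf μ X x → 0 < prOf μ X x' → f x = f x' → m x = m x')
    (hle : entOf μ (fun ω => f (X ω)) ≤ entOf μ (fun ω => m (X ω)))
    {x x' : 𝒳} (hx : 0 < prOf μ X x) (hx' : 0 < prOf μ X x') (hm : m x = m x') :
    f x = f x' := by
  have hsub : ∀ z, 0 < prOf μ X z →
      prOf μ (fun ω => f (X ω)) (f z) ≤ prOf μ (fun ω => m (X ω)) (m z) := by
    intro z hz
    rw [prOf_comp hX, prOf_comp hX, Finset.sum_filter, Finset.sum_filter]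
    refine Finset.sum_le_sum fun w _ => ?_
    have hw := prOf_nonneg (μ := μ) X w
    have := hfm w z
    grind
  have hpos : ∀ z, 0 < prOf μ X z → 0 < prOf μ (fun ω => f (X ω)) (f z) :=
    fun z hz => hz.trans_le (prOf_le_prOf_comp hX f z)
  have hterm : ∀ z ∈ Finset.univ,
      prOf μ X z * Real.log (prOf μ (fun ω => f (X ω)) (f z)) ≤
        prOf μ X z * Real.log (prOf μ (fun ω => m (X ω)) (m z)) := by
    intro z _
    rcases (prOf_nonneg (μ := μ) X z).eq_or_lt with hz | hz
    · simp [← hz]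
    · exact mul_le_mul_of_nonneg_left (Real.log_le_log (hpos z hz) (hsub z hz)) hz.le
  rw [entOf_comp hX, entOf_comp hX, neg_le_neg_iff] at hle
  have heq := (Finset.sum_eq_sum_iff_of_le hterm).1
    (le_antisymm (Finset.sum_le_sum hterm) hle) x (Finset.mem_univ x)
  have hlog := mul_left_cancel₀ hx.ne' heq
  have hprob := Real.log_injOn_pos (hpos x hx) ((hpos x hx).trans_le (hsub x hx)) hlog
  by_contra hne
  refine absurd hprob (ne_of_lt ?_)
  rw [prOf_comp hX, prOf_comp hX, Finset.sum_filter, Finset.sum_filter]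
  refine Finset.sum_lt_sum (fun w _ => ?_) ⟨x', Finset.mem_univ x', ?_⟩
  · have hw := prOf_nonneg (μ := μ) X w
    have := hfm w x
    grind
  · rw [if_neg (Ne.symm hne), if_pos hm.symm]
    exact hx'

end FiniteRandomVariable

/-- A sufficient statistic `S = f(X)` achieving the minimum of `I(X;T)` over all
sufficient statistics `T = h(X)` is minimal: every sufficient statistic `T = h(X)`
determines `S` via some `g` with `S = g(T)` μ-almost surely. -/
theorem stmt6 {Ω 𝒳 𝒴 𝒮 : Type*} [MeasurableSpace Ω]
    [MeasurableSpace 𝒳] [MeasurableSingletonClass 𝒳]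
    [MeasurableSpace 𝒴] [MeasurableSingletonClass 𝒴]
    [Fintype 𝒳] [Fintype 𝒴] [Fintype 𝒮]
    (μ : Measure Ω) [IsProbabilityMeasure μ]
    (X : Ω → 𝒳) (Y : Ω → 𝒴) (hX : Measurable X) (hY : Measurable Y)
    (f : 𝒳 → 𝒮)
    (hsuff : CondIndepGiven μ X Y (fun ω => f (X ω)))
    (hmin : ∀ (𝒯 : Type) [Fintype 𝒯] (h : 𝒳 → 𝒯),
      CondIndepGiven μ X Y (fun ω => h (X ω)) →
      miOf μ X (fun ω => f (X ω)) ≤ miOf μ X (fun ω => h (X ω))) :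
    ∀ (𝒯 : Type) [Fintype 𝒯] (h : 𝒳 → 𝒯),
      CondIndepGiven μ X Y (fun ω => h (X ω)) →
      ∃ g : 𝒯 → 𝒮, ∀ᵐ ω ∂μ, f (X ω) = g (h (X ω)) := by
  intro 𝒯 _ h hh
  let law : 𝒳 → 𝒴 → ℝ := fun x y => prOf μ (fun ω => (X ω, Y ω)) (x, y) / prOf μ X x
  let e := Finite.equivFin (Set.range law)
  let m : 𝒳 → Fin (Nat.card (Set.range law)) := fun x => e ⟨law x, x, rfl⟩
  have hm : ∀ x x', m x = m x' ↔ law x = law x' := fun x x' =>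
    e.injective.eq_iff.trans Subtype.mk_eq_mk
  have hmsuff : CondIndepGiven μ X Y (fun ω => m (X ω)) :=
    (condIndepGiven_comp_iff hX hY m).2
      fun x x' _ _ hxx' y => congrFun ((hm x x').1 hxx') y
  have hent := hmin _ m hmsuff
  rw [miOf_comp hX, miOf_comp hX] at hent
  have hdet : ∀ x x', 0 < prOf μ X x → 0 < prOf μ X x' → h x = h x' → f x = f x' := by
    intro x x' hx hx' hxx'
    refine eq_of_entOf_comp_le hX (fun z z' hz hz' hzz' => ?_) hent hx hx' ?_
    · exact (hm z z').2
        (funext ((condIndepGiven_comp_iff hX hY f).1 hsuff z z' hz hz' hzz'))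
    · exact (hm x x').2
        (funext ((condIndepGiven_comp_iff hX hY h).1 hh x x' hx hx' hxx'))
  have : Nonempty 𝒮 := (nonempty_of_isProbabilityMeasure μ).map fun ω => f (X ω)
  let g : 𝒯 → 𝒮 := fun t =>
    if ht : ∃ x, 0 < prOf μ X x ∧ h x = t then f ht.choose else Classical.arbitrary 𝒮
  refine ⟨g, ?_⟩
  filter_upwards [ae_prOf_pos (μ := μ) X] with ω hω
  have ht : ∃ x, 0 < prOf μ X x ∧ h x = h (X ω) := ⟨X ω, hω, rfl⟩
  simp only [g, dif_pos ht]
  exact hdet _ _ hω ht.choose_spec.1 ht.choose_spec.2.symm
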